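/- Define α, σ : ℝ → ℝ by α(λ) = e^λ / √(1 + e^{2λ}) and σ(λ) = 1 / √(1 + e^{2λ}), let E be a finite-dimensional real normed vector space, let c ∈ E, and let x : ℝ → E be differentiable with x'(λ) = α(λ) c − α(λ)² x(λ) for all λ. Then for all λ₀ ≤ λ₁, setting h = λ₁ − λ₀, one has x(λ₁) = (σ(λ₁)/σ(λ₀)) · x(λ₀) + α(λ₁) · (1 − e^{−h}) · c. -/

import Mathlib

/-- Signal rate in the log-SNR parameterization. -/
noncomputable def αRate (l : ℝ) : ℝ := Real.exp l / Real.sqrt (1 + Real.exp (2 * l))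

/-- Noise rate in the log-SNR parameterization. -/
noncomputable def σRate (l : ℝ) : ℝ := 1 / Real.sqrt (1 + Real.exp (2 * l))

/-!
Since `σ' = -α² σ`, the noise rate solves the homogeneous equation `s' = -α² s`, so by variation of
constants `(x / σ)' = (α / σ) c = exp · c`. Integrating gives
`x(λ₁) / σ(λ₁) - x(λ₀) / σ(λ₀) = (exp λ₁ - exp λ₀) c`.
-/

section LinearODE

variable {𝕜 E : Type*} [RCLike 𝕜] [NormedAddCommGroup E] [NormedSpace 𝕜 E]

theorem hasDerivWithinAt_inv_smul_of_linear_ode {s : 𝕜 → 𝕜} {x : 𝕜 → E} {a t : 𝕜} {f : E}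
    {D : Set 𝕜} (hst : s t ≠ 0) (hs : HasDerivWithinAt s (-(a * s t)) D t)
    (hx : HasDerivWithinAt x (f - a • x t) D t) :
    HasDerivWithinAt (fun r ↦ (s r)⁻¹ • x r) ((s t)⁻¹ • f) D t := by
  refine ((hs.fun_inv hst).fun_smul hx).congr_deriv ?_
  have inv_deriv : -(-(a * s t)) / s t ^ 2 = (s t)⁻¹ * a := by field_simp
  rw [inv_deriv, smul_sub, smul_smul, sub_add_cancel]

theorem sub_eq_sub_of_hasDerivWithinAt_eq {y G g : 𝕜 → E} {D : Set 𝕜}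
    (hD : Convex ℝ D) (hy : ∀ t ∈ D, HasDerivWithinAt y (g t) D t)
    (hG : ∀ t ∈ D, HasDerivWithinAt G (g t) D t) {t₀ t₁ : 𝕜} (ht₀ : t₀ ∈ D) (ht₁ : t₁ ∈ D) :
    y t₁ - y t₀ = G t₁ - G t₀ := by
  have deriv_zero : ∀ t ∈ D, HasDerivWithinAt (fun r ↦ y r - G r) 0 D t := fun t ht ↦ by
    simpa only [sub_self] using (hy t ht).fun_sub (hG t ht)
  have diff_const : (y t₁ - G t₁) - (y t₀ - G t₀) = 0 := by
    simpa only [zero_mul, norm_le_zero_iff] using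
      hD.norm_image_sub_le_of_norm_hasDerivWithin_le deriv_zero (fun _ _ ↦ norm_zero.le) ht₀ ht₁
  rwa [sub_sub_sub_comm, sub_eq_zero] at diff_const

theorem eq_smul_add_smul_of_linear_ode {s a : 𝕜 → 𝕜} {x f G : 𝕜 → E} {D : Set 𝕜}
    (hD : Convex ℝ D) (hs₀ : ∀ t ∈ D, s t ≠ 0)
    (hs : ∀ t ∈ D, HasDerivWithinAt s (-(a t * s t)) D t)
    (hx : ∀ t ∈ D, HasDerivWithinAt x (f t - a t • x t) D t)
    (hG : ∀ t ∈ D, HasDerivWithinAt G ((s t)⁻¹ • f t) D t)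
    {t₀ t₁ : 𝕜} (ht₀ : t₀ ∈ D) (ht₁ : t₁ ∈ D) :
    x t₁ = (s t₁ / s t₀) • x t₀ + s t₁ • (G t₁ - G t₀) := by
  have increment : (s t₁)⁻¹ • x t₁ - (s t₀)⁻¹ • x t₀ = G t₁ - G t₀ :=
    sub_eq_sub_of_hasDerivWithinAt_eq hD
      (fun t ht ↦ hasDerivWithinAt_inv_smul_of_linear_ode (hs₀ t ht) (hs t ht) (hx t ht))
      hG ht₀ ht₁
  rw [← increment, smul_sub, smul_inv_smul₀ (hs₀ t₁ ht₁), smul_smul, ← div_eq_mul_inv,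
    add_sub_cancel]

end LinearODE

theorem σRate_pos (l : ℝ) : 0 < σRate l := by
  unfold σRate
  positivity

theorem αRate_eq_exp_mul_σRate (l : ℝ) : αRate l = Real.exp l * σRate l := by
  rw [αRate, σRate, mul_one_div]

theorem hasDerivAt_sqrt_one_add_exp_two_mul (l : ℝ) :
    HasDerivAt (fun r ↦ √(1 + Real.exp (2 * r)))
      (Real.exp (2 * l) / √(1 + Real.exp (2 * l))) l := by
  have radicand_deriv : HasDerivAt (fun r ↦ 1 + Real.exp (2 * r)) (Real.exp (2 * l) * (2 * 1)) l :=
    ((hasDerivAt_id l).const_mul 2).exp.const_add 1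
  refine (radicand_deriv.sqrt (by positivity)).congr_deriv ?_
  field_simp

theorem hasDerivAt_σRate (l : ℝ) : HasDerivAt σRate (-(αRate l ^ 2 * σRate l)) l := by
  have sqrt_ne_zero : √(1 + Real.exp (2 * l)) ≠ 0 := by positivity
  have σRate_eq_inv : σRate = fun r ↦ (√(1 + Real.exp (2 * r)))⁻¹ :=
    funext fun _ ↦ one_div _
  rw [σRate_eq_inv]
  refine ((hasDerivAt_sqrt_one_add_exp_two_mul l).fun_inv sqrt_ne_zero).congr_deriv ?_
  have exp_sq : Real.exp (2 * l) = Real.exp l ^ 2 := Real.exp_nat_mul l 2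
  rw [αRate, div_pow, ← exp_sq]
  field_simp

theorem αRate_mul_one_sub_exp_neg_sub (l₀ l₁ : ℝ) :
    αRate l₁ * (1 - Real.exp (-(l₁ - l₀))) = σRate l₁ * (Real.exp l₁ - Real.exp l₀) := by
  have exp_shift : Real.exp l₁ * Real.exp (-(l₁ - l₀)) = Real.exp l₀ := by
    rw [← Real.exp_add]
    ring_nf
  rw [αRate_eq_exp_mul_σRate, ← exp_shift]
  ring

theorem frozen_prediction_exact_step_general
    {E : Type*} [NormedAddCommGroup E] [NormedSpace ℝ E] (c : E) (x : ℝ → E) (lam₀ lam₁ : ℝ)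
    (hx : ∀ l ∈ Set.uIcc lam₀ lam₁,
      HasDerivWithinAt x (αRate l • c - αRate l ^ 2 • x l) (Set.uIcc lam₀ lam₁) l)
    (h : ℝ) (hh : h = lam₁ - lam₀) :
    x lam₁ = (σRate lam₁ / σRate lam₀) • x lam₀ + (αRate lam₁ * (1 - Real.exp (-h))) • c := by
  have exp_smul_deriv (l : ℝ) :
      HasDerivAt (fun r ↦ Real.exp r • c) ((σRate l)⁻¹ • αRate l • c) l := by
    refine ((Real.hasDerivAt_exp l).smul_const c).congr_deriv ?_
    rw [αRate_eq_exp_mul_σRate, mul_comm, mul_smul, inv_smul_smul₀ (σRate_pos l).ne']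
  rw [eq_smul_add_smul_of_linear_ode (convex_uIcc lam₀ lam₁) (fun l _ ↦ (σRate_pos l).ne')
    (fun l _ ↦ (hasDerivAt_σRate l).hasDerivWithinAt) hx
    (fun l _ ↦ (exp_smul_deriv l).hasDerivWithinAt) Set.left_mem_uIcc Set.right_mem_uIcc,
    hh, αRate_mul_one_sub_exp_neg_sub, mul_smul, sub_smul]

/-- Exact solution of the probability-flow ODE with frozen clean-image
prediction `c` reproduces the first-order exponential (DDIM-type) step. -/
theorem frozen_prediction_exact_step
    {E : Type*} [NormedAddCommGroup E] [NormedSpace ℝ E] [FiniteDimensional ℝ E]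
    (c : E) (x : ℝ → E)
    (hx : ∀ l, HasDerivAt x (αRate l • c - αRate l ^ 2 • x l) l)
    (lam₀ lam₁ : ℝ) (hle : lam₀ ≤ lam₁) (h : ℝ) (hh : h = lam₁ - lam₀) :
    x lam₁ = (σRate lam₁ / σRate lam₀) • x lam₀ + (αRate lam₁ * (1 - Real.exp (-h))) • c :=
  frozen_prediction_exact_step_general c x lam₀ lam₁ (fun l _ ↦ (hx l).hasDerivWithinAt) h hh
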